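/- Let H ⊂ k[x_1,...,x_n] be a finite set of nonzero homogeneous polynomials whose leading terms (w.r.t. degrevlex with x_n smallest) are pairwise Pommaret-indivisible, and suppose I = ⊕_{h ∈ H} k[X_P(h)]·h as a direct sum of k-vector spaces, where X_P(h) = {x_{cls(h)}, ..., x_n}. Then the Hilbert series of I satisfies HS_I(t) = (1 - Σ_{h∈H} (1-t)^{n_h} t^{c_h}) / (1-t)^n, where c_h = deg(h) and n_h = cls(h) - 1 is the number of non-multiplicative variables of h. -/

import Mathlib

open MvPolynomial PowerSeries

attribute [local instance] MvPolynomial.gradedAlgebra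

/-- Strict degree reverse lexicographic order with `x_n` (highest index) smallest. -/
def DegRevLexLT {n : ℕ} (α β : Fin n →₀ ℕ) : Prop :=
  (α.sum fun _ v => v) < (β.sum fun _ v => v) ∨
    ((α.sum fun _ v => v) = (β.sum fun _ v => v) ∧
      ∃ i : Fin n, β i < α i ∧ ∀ j : Fin n, i < j → α j = β j)

/-- `e` is the exponent of the leading term of `f` w.r.t. degrevlex. -/
def IsLeadExp {n : ℕ} {k : Type*} [CommRing k] (f : MvPolynomial (Fin n) k)
    (e : Fin n →₀ ℕ) : Prop :=
  e ∈ f.support ∧ ∀ e' ∈ f.support, e' ≠ e → DegRevLexLT e' e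

/-- The Hilbert function of an ideal (image of the degree-`s` homogeneous component in the
quotient). -/
noncomputable def hilbFn {n : ℕ} {k : Type*} [Field k]
    (I : Ideal (MvPolynomial (Fin n) k)) (s : ℕ) : ℕ :=
  Module.finrank k
    ((MvPolynomial.homogeneousSubmodule (Fin n) k s).map
      (Ideal.Quotient.mkₐ k I).toLinearMap)

/-- The Hilbert series of `I` with coefficients in `ℚ`. -/
noncomputable def hilbSeries {n : ℕ} {k : Type*} [Field k]
    (I : Ideal (MvPolynomial (Fin n) k)) : PowerSeries ℚ :=
  PowerSeries.mk fun s => (hilbFn I s : ℚ)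

open Finset in
/-- Exponents of degree `d - m` supported in the variables of index at least `c`. -/
def pomExps {n : ℕ} (c : ℕ) (m d : ℕ) : Finset (Fin n →₀ ℕ) :=
  if m ≤ d then finsuppAntidiag (univ.filter fun l : Fin n => c ≤ l.1) (d - m) else ∅

lemma mem_pomExps {n : ℕ} (c m d : ℕ) (a : Fin n →₀ ℕ) :
    a ∈ pomExps c m d ↔ a.degree + m = d ∧ ∀ l : Fin n, l.1 < c → a l = 0 := by
  unfold pomExps
  have hs : a.support ⊆ (Finset.univ.filter fun l : Fin n => c ≤ l.1) ↔
      ∀ l : Fin n, l.1 < c → a l = 0 := by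
    constructor
    · intro H l hl
      by_contra h0
      have := H (Finsupp.mem_support_iff.2 h0)
      simp at this
      omega
    · intro H l hl
      rw [Finsupp.mem_support_iff] at hl
      simp only [Finset.mem_filter, Finset.mem_univ, true_and]
      by_contra h0
      exact hl (H l (by omega))
  have hdeg : (a.sum fun _ x => x) = a.degree := rfl
  split_ifs with hm
  · rw [Finset.mem_finsuppAntidiag', hs, hdeg]
    constructor
    · rintro ⟨h1, h2⟩
      exact ⟨by omega, h2⟩
    · rintro ⟨h1, h2⟩
      exact ⟨by omega, h2⟩
  · simp only [Finset.notMem_empty, false_iff]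
    rintro ⟨h1, -⟩
    omega

lemma card_pomExps {n : ℕ} (c m d : ℕ) (hc : c ≤ n) :
    ((pomExps (n := n) c m d).card : ℚ) =
      PowerSeries.coeff d (PowerSeries.X ^ m * (PowerSeries.mk 1 : PowerSeries ℚ) ^ (n - c)) := by
  have hcard : (Finset.univ.filter fun l : Fin n => c ≤ l.1).card = n - c := by
    have h1 := Finset.card_filter_add_card_filter_not (s := (Finset.univ : Finset (Fin n)))
      (fun l : Fin n => l.1 < c)
    rw [Fin.card_filter_val_lt, Finset.card_univ, Fintype.card_fin] at h1
    simp only [not_lt] at h1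
    omega
  rw [PowerSeries.coeff_X_pow_mul']
  unfold pomExps
  split_ifs with hm
  · rw [← hcard, ← Finset.prod_const, PowerSeries.coeff_prod]
    simp
  · simp

lemma finrank_restrict {n : ℕ} {k : Type*} [Field k] (S : Finset (Fin n →₀ ℕ)) :
    Module.finrank k (restrictSupport k (S : Set (Fin n →₀ ℕ))) = S.card := by
  rw [Module.finrank_eq_nat_card_basis (basisRestrictSupport k (S : Set (Fin n →₀ ℕ)))]
  simp

lemma finite_restrict {n : ℕ} {k : Type*} [Field k] (S : Finset (Fin n →₀ ℕ)) :
    Module.Finite k (restrictSupport k (S : Set (Fin n →₀ ℕ))) :=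
  Module.Finite.of_basis (basisRestrictSupport k (S : Set (Fin n →₀ ℕ)))

lemma homogeneousSubmodule_eq_restrict {n : ℕ} {k : Type*} [Field k] (d : ℕ) :
    homogeneousSubmodule (Fin n) k d =
      restrictSupport k ((pomExps 0 0 d : Finset (Fin n →₀ ℕ)) : Set (Fin n →₀ ℕ)) := by
  rw [homogeneousSubmodule_eq_finsupp_supported]
  unfold restrictSupport
  congr 1
  ext a
  simp [mem_pomExps]

lemma homogeneousComponent_mul_hom {n : ℕ} {k : Type*} [Field k]
    (g h : MvPolynomial (Fin n) k) (m d : ℕ) (hh : h.IsHomogeneous m) :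
    homogeneousComponent d (g * h) =
      if m ≤ d then homogeneousComponent (d - m) g * h else 0 := by
  have key : ∀ j, homogeneousComponent d (homogeneousComponent j g * h) =
      if j + m = d then homogeneousComponent j g * h else 0 := by
    intro j
    rw [homogeneousComponent_of_mem
      (((homogeneousComponent_isHomogeneous j g).mul hh : IsHomogeneous _ _))]
    simp only [eq_comm]
  conv_lhs => rw [← sum_homogeneousComponent g, Finset.sum_mul, map_sum]
  simp only [key]
  split_ifs with hm
  · have : ∀ j, (j + m = d) ↔ (j = d - m) := fun j => by omega
    simp only [this, Finset.sum_ite_eq', Finset.mem_range]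
    split_ifs with h1
    · rfl
    · rw [homogeneousComponent_eq_zero _ _ (by omega), zero_mul]
  · apply Finset.sum_eq_zero
    intro j _
    rw [if_neg (by omega)]

lemma hilbFn_add {n : ℕ} {k : Type*} [Field k]
    (I : Ideal (MvPolynomial (Fin n) k)) (d : ℕ) :
    hilbFn I d + Module.finrank k
      (homogeneousSubmodule (Fin n) k d ⊓ I.restrictScalars k : Submodule k _) =
      (pomExps (n := n) 0 0 d).card := by
  have hfin : Module.Finite k (homogeneousSubmodule (Fin n) k d) := by
    rw [homogeneousSubmodule_eq_restrict]; exact finite_restrict _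
  have h1 := LinearMap.finrank_range_add_finrank_ker
    ((Ideal.Quotient.mkₐ k I).toLinearMap.domRestrict (homogeneousSubmodule (Fin n) k d))
  have hk : LinearMap.ker (Ideal.Quotient.mkₐ k I).toLinearMap = I.restrictScalars k := by
    ext x
    simp [Ideal.Quotient.eq_zero_iff_mem]
  rw [LinearMap.range_domRestrict, LinearMap.ker_domRestrict, hk,
    ← Submodule.finrank_map_subtype_eq, Submodule.map_comap_subtype] at h1
  unfold hilbFn
  rw [h1, ← finrank_restrict (k := k), homogeneousSubmodule_eq_restrict]

/-- Let `H = {h_1,…,h_s} ⊆ k[x_1,…,x_n]` consist of nonzero homogeneous polynomials whose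
degrevlex leading exponents `e i` (with class index `c i`, the largest index with nonzero
exponent) are pairwise Pommaret-indivisible, and suppose
`I = ⊕_i k[x_{cls(h_i)},…,x_n]·h_i` (every `f ∈ I` has a unique representation
`Σ g_i h_i` with `g_i` involving only the multiplicative variables `x_{cls(h_i)},…,x_n`).
Then `HS_I(t)·(1-t)^n = 1 - Σ_i (1-t)^{n_i} t^{c_i}` where `c_i = deg h_i` and
`n_i = cls(h_i) - 1` is the number of non-multiplicative variables of `h_i`. -/
theorem hilbert_series_of_pommaret_decomposition {k : Type*} [Field k] (n s : ℕ)
    (h : Fin s → MvPolynomial (Fin n) k) (e : Fin s → (Fin n →₀ ℕ))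
    (c : Fin s → Fin n) (dg : Fin s → ℕ) (I : Ideal (MvPolynomial (Fin n) k))
    (hne : ∀ i, h i ≠ 0)
    (hhom : ∀ i, h i ∈ MvPolynomial.homogeneousSubmodule (Fin n) k (dg i))
    (hlead : ∀ i, IsLeadExp (h i) (e i))
    (hcls : ∀ i, e i (c i) ≠ 0 ∧ ∀ j : Fin n, c i < j → e i j = 0)
    (hindiv : ∀ i j, i ≠ j →
      ¬ (e i ≤ e j ∧ ∀ l : Fin n, l < c i → e j l = e i l))
    (hmem : ∀ i, h i ∈ I)
    (hdecomp : ∀ f ∈ I, ∃! g : Fin s → MvPolynomial (Fin n) k,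
      (∀ i, ∀ a ∈ (g i).support, ∀ l : Fin n, l < c i → a l = 0) ∧
      f = ∑ i, g i * h i) :
    hilbSeries I * (1 - PowerSeries.X) ^ n =
      1 - ∑ i, (1 - PowerSeries.X) ^ ((c i : ℕ)) * PowerSeries.X ^ (dg i) := by
  classical
  let V : ℕ → Fin s → Submodule k (MvPolynomial (Fin n) k) := fun d i =>
    restrictSupport k ((pomExps (c i) (dg i) d : Finset (Fin n →₀ ℕ)) : Set (Fin n →₀ ℕ))
  have hV : ∀ d i p, p ∈ V d i ↔
      ∀ a ∈ p.support, a.degree + dg i = d ∧ ∀ l : Fin n, l < c i → a l = 0 := by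
    intro d i p
    simp only [V, mem_restrictSupport_iff]
    constructor
    · intro H a ha
      exact (mem_pomExps _ _ _ _).1 (H ha)
    · intro H a ha
      exact (mem_pomExps _ _ _ _).2 (H a ha)
  have hrank : ∀ d, Module.finrank k
      (homogeneousSubmodule (Fin n) k d ⊓ I.restrictScalars k : Submodule k _) =
      ∑ i, (pomExps (n := n) (c i) (dg i) d).card := by
    intro d
    have : ∀ i, Module.Finite k (V d i) := fun i => finite_restrict _
    let Φ : (∀ i, V d i) →ₗ[k] MvPolynomial (Fin n) k :=
      ∑ i, (LinearMap.mulRight k (h i)) ∘ₗ (V d i).subtype ∘ₗ LinearMap.proj i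
    have hΦ : ∀ g, Φ g = ∑ i, (g i : MvPolynomial (Fin n) k) * h i := by
      intro g
      simp [Φ]
    have hΦI : ∀ g, Φ g ∈ I := by
      intro g
      rw [hΦ]
      exact I.sum_mem fun i _ => I.mul_mem_left _ (hmem i)
    have hinj : Function.Injective Φ := by
      intro g g' hgg
      have hu := (hdecomp (Φ g) (hΦI g)).unique
        (y₁ := fun i => (g i : MvPolynomial (Fin n) k))
        (y₂ := fun i => (g' i : MvPolynomial (Fin n) k))
        ⟨fun i a ha => (((hV d i _).1 (g i).2) a ha).2, hΦ g⟩
        ⟨fun i a ha => (((hV d i _).1 (g' i).2) a ha).2, hgg.trans (hΦ g')⟩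
      funext i
      exact Subtype.ext (congrFun hu i)
    have hrange : LinearMap.range Φ =
        homogeneousSubmodule (Fin n) k d ⊓ I.restrictScalars k := by
      apply le_antisymm
      · rintro _ ⟨g, rfl⟩
        refine ⟨?_, hΦI g⟩
        rw [hΦ]
        refine Submodule.sum_mem _ fun i _ => ?_
        by_cases hg0 : (g i : MvPolynomial (Fin n) k) = 0
        · rw [hg0, zero_mul]; exact Submodule.zero_mem _
        have hgi := (hV d i _).1 (g i).2
        obtain ⟨a, ha⟩ := support_nonempty.2 hg0
        have had := (hgi a ha).1
        have hgh : (g i : MvPolynomial (Fin n) k).IsHomogeneous (d - dg i) := by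
          rw [← mem_homogeneousSubmodule, homogeneousSubmodule_eq_restrict,
            mem_restrictSupport_iff]
          intro b hb
          have := (hgi b hb).1
          rw [Finset.mem_coe, mem_pomExps]
          exact ⟨by omega, fun l hl => absurd hl (Nat.not_lt_zero _)⟩
        have := hgh.mul (hhom i)
        rwa [show d - dg i + dg i = d by omega] at this
      · rintro f ⟨hf, hfI⟩
        obtain ⟨g, ⟨hg1, hg2⟩, -⟩ := hdecomp f hfI
        refine ⟨fun i => ⟨if dg i ≤ d then homogeneousComponent (d - dg i) (g i) else 0, ?_⟩, ?_⟩
        · rw [hV]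
          intro a ha
          split_ifs at ha with hd
          · rw [mem_support_iff, coeff_homogeneousComponent] at ha
            split_ifs at ha with h2
            · exact ⟨by omega, hg1 i a (mem_support_iff.2 ha)⟩
            · exact absurd rfl ha
          · simp at ha
        · rw [hΦ]
          have h3 : homogeneousComponent d f = f := by
            rw [homogeneousComponent_of_mem hf, if_pos rfl]
          rw [← h3, hg2, map_sum]
          refine Finset.sum_congr rfl fun i _ => ?_
          rw [homogeneousComponent_mul_hom _ _ _ _ (hhom i)]
          simp only [ite_mul, zero_mul]
    rw [← hrange, LinearMap.finrank_range_of_inj hinj, Module.finrank_pi_fintype]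
    exact Finset.sum_congr rfl fun i _ => finrank_restrict _
  have hser : hilbSeries I + ∑ i, PowerSeries.X ^ (dg i) *
      (PowerSeries.mk 1 : PowerSeries ℚ) ^ (n - c i) = (PowerSeries.mk 1) ^ n := by
    ext d
    have h1 := hilbFn_add I d
    rw [hrank d] at h1
    have h2 : (hilbFn I d : ℚ) + ∑ i, ((pomExps (n := n) (c i) (dg i) d).card : ℚ) =
        ((pomExps (n := n) 0 0 d).card : ℚ) := by exact_mod_cast h1
    rw [card_pomExps 0 0 d (Nat.zero_le n)] at h2
    simp only [card_pomExps _ _ d (c _).2.le] at h2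
    rw [map_add, map_sum]
    simpa [hilbSeries] using h2
  have hone : (PowerSeries.mk 1 : PowerSeries ℚ) * (1 - PowerSeries.X) = 1 :=
    PowerSeries.mk_one_mul_one_sub_eq_one ℚ
  rw [eq_sub_of_add_eq hser, sub_mul, ← mul_pow, hone, one_pow, Finset.sum_mul]
  congr 1
  refine Finset.sum_congr rfl fun i _ => ?_
  have hn : (1 - PowerSeries.X : PowerSeries ℚ) ^ n =
      (1 - PowerSeries.X) ^ (n - (c i : ℕ)) * (1 - PowerSeries.X) ^ (c i : ℕ) := by
    rw [← pow_add, Nat.sub_add_cancel (c i).2.le]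
  rw [hn]
  calc _ = PowerSeries.X ^ dg i * (((PowerSeries.mk 1 : PowerSeries ℚ) *
        (1 - PowerSeries.X)) ^ (n - (c i : ℕ))) * (1 - PowerSeries.X) ^ (c i : ℕ) := by
        rw [mul_pow]; ring
    _ = _ := by rw [hone, one_pow]; ring
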